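/- arXiv:1512.03336 — 2 statements merged into one kernel-verified Lean document; each statement's English description precedes it below -/
import Mathlib

section
/- The Tandori sequence space l̃_1 is isomorphic as a Banach space to the l_1-sum (⊕_{n=0}^∞ l_∞^{2^n})_{l_1}, where l_∞^m denotes ℝ^m equipped with the maximum norm. -/
/-!
The space `l̃₁` is split along the dyadic blocks `{2 ^ n - 1 + i : i < 2 ^ n}` of `ℕ`. With `b n` the
maximum of `|x k|` over the `n`-th block, the Tandori norm of `x` is equivalent to
`∑ n, 2 ^ n * b n`, as values in `[0, ∞]`:

* `dyadicNorm_le`: the tail suprema `S m = sup_{k ≥ m} |x k|` are antitone and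
  `b n ≤ S (2 ^ n - 1)`, so Cauchy condensation bounds `∑ n, 2 ^ n * b n` by a multiple of `∑ m, S m`;
* `tandoriNorm_le`: `S m` is at most the sum of those `b j` whose block meets `[m, ∞)`, and
  the `j`-th block meets `[m, ∞)` for fewer than `2 * 2 ^ j` values of `m`.

Hence cutting a sequence into its dyadic blocks and multiplying the `n`-th block by `2 ^ n` is an
isomorphism of `l̃₁` onto the `l₁`-sum of the spaces `l_∞^{2^n}`.
-/

open MeasureTheory Filter Topology ENNReal Set

set_option synthInstance.maxHeartbeats 1000000

noncomputable section

/-- The Tandori `l̃₁` norm of a real sequence (0-based indexing: `x k` is the `(k+1)`-st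
term): `∑_{n=1}^∞ sup_{k ≥ n} |x_k|`. -/
def tandoriNorm (x : ℕ → ℝ) : ℝ≥0∞ :=
  ∑' n : ℕ, ⨆ k : ℕ, ⨆ _ : n ≤ k, ENNReal.ofReal |x k|

/-- A Banach space `E` *represents* the sequence space with extended-valued norm functional
`N`. -/
def RepSeq (N : (ℕ → ℝ) → ℝ≥0∞) (E : Type*) [NormedAddCommGroup E]
    [NormedSpace ℝ E] : Prop :=
  ∃ J : E →ₗ[ℝ] (ℕ → ℝ), Function.Injective J ∧
    Set.range J = {x | N x ≠ ⊤} ∧ ∀ e : E, ‖e‖ = (N (J e)).toReal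

/-- The position in `ℕ` (counted from `0`) of the `i`-th entry of the `n`-th dyadic block. -/
def blockIndex (p : Σ n : ℕ, Fin (2 ^ n)) : ℕ := 2 ^ p.1 - 1 + p.2

lemma blockIndex_bijective : Function.Bijective blockIndex := by
  constructor
  · rintro ⟨n, i⟩ ⟨m, j⟩ h
    simp only [blockIndex] at h
    have hn := Nat.one_le_two_pow (n := n)
    have hm := Nat.one_le_two_pow (n := m)
    have hi := i.2
    have hj := j.2
    have hnm : n = m := by
      have h1 : Nat.log 2 (2 ^ n + i) = n :=
        Nat.log_eq_of_pow_le_of_lt_pow (by omega) (by rw [pow_succ]; omega)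
      have h2 : Nat.log 2 (2 ^ m + j) = m :=
        Nat.log_eq_of_pow_le_of_lt_pow (by omega) (by rw [pow_succ]; omega)
      rw [← h1, ← h2]
      congr 1
      omega
    subst hnm
    have : i = j := Fin.ext (by omega)
    rw [this]
  · intro k
    have h1 : 2 ^ Nat.log 2 (k + 1) ≤ k + 1 := Nat.pow_log_le_self 2 (by omega)
    have h2 : k + 1 < 2 ^ (Nat.log 2 (k + 1) + 1) := Nat.lt_pow_succ_log_self (by omega) _
    rw [pow_succ] at h2
    have h3 := Nat.one_le_two_pow (n := Nat.log 2 (k + 1))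
    refine ⟨⟨Nat.log 2 (k + 1), ⟨k + 1 - 2 ^ Nat.log 2 (k + 1), by omega⟩⟩, ?_⟩
    simp only [blockIndex]
    omega

/-- The decomposition of `ℕ` into dyadic blocks. -/
def blockEquiv : (Σ n : ℕ, Fin (2 ^ n)) ≃ ℕ := Equiv.ofBijective _ blockIndex_bijective

lemma blockEquiv_apply (n : ℕ) (i : Fin (2 ^ n)) : blockEquiv ⟨n, i⟩ = 2 ^ n - 1 + i := rfl

/-- The largest absolute value of `x` on the `n`-th dyadic block. -/
def blockSup (x : ℕ → ℝ) (n : ℕ) : ℝ≥0∞ :=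
  ⨆ i : Fin (2 ^ n), ENNReal.ofReal |x (blockEquiv ⟨n, i⟩)|

/-- The weighted `l₁`-sum of the suprema over dyadic blocks. -/
def dyadicNorm (x : ℕ → ℝ) : ℝ≥0∞ := ∑' n : ℕ, 2 ^ n * blockSup x n

lemma dyadicNorm_le (x : ℕ → ℝ) : dyadicNorm x ≤ 5 * tandoriNorm x := by
  set S : ℕ → ℝ≥0∞ := fun n => ⨆ k : ℕ, ⨆ _ : n ≤ k, ENNReal.ofReal |x k| with hS
  have hanti : ∀ m n, m ≤ n → S n ≤ S m := fun m n h =>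
    iSup_le fun k => iSup_le fun hk => le_iSup₂_of_le k (h.trans hk) le_rfl
  have hT : tandoriNorm x = ∑' n, S n := rfl
  have h0 : S 0 ≤ tandoriNorm x := ENNReal.le_tsum 0
  -- Condensation concerns the values at `2 ^ n`, whereas the blocks start at `2 ^ n - 1`: it is
  -- applied to the shifted sequence `S (m - 1)`, whose first two terms are both `S 0`.
  have hc := ENNReal.tsum_condensed_le (f := fun m => S (m - 1))
    (fun m n _ h => hanti _ _ (by omega))
  have hshift : ∑' m, S (m - 1) = S 0 + tandoriNorm x := by
    rw [hT, tsum_eq_zero_add' ENNReal.summable]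
    simp
  rw [hshift] at hc
  calc dyadicNorm x ≤ ∑' n : ℕ, 2 ^ n * S (2 ^ n - 1) := by
        refine ENNReal.tsum_le_tsum fun n => mul_le_mul_right ?_ _
        refine iSup_le fun i => le_iSup₂_of_le (blockEquiv ⟨n, i⟩) ?_ le_rfl
        rw [blockEquiv_apply]
        omega
    _ ≤ S 0 + 2 * (S 0 + tandoriNorm x) := hc
    _ ≤ tandoriNorm x + 2 * (tandoriNorm x + tandoriNorm x) := by gcongr
    _ = 5 * tandoriNorm x := by ring

lemma tandoriNorm_le (x : ℕ → ℝ) : tandoriNorm x ≤ 2 * dyadicNorm x := by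
  have hterm : ∀ m : ℕ, (⨆ k : ℕ, ⨆ _ : m ≤ k, ENNReal.ofReal |x k|) ≤
      ∑' j : ℕ, if m < 2 * 2 ^ j then blockSup x j else 0 := by
    refine fun m => iSup_le fun k => iSup_le fun hk => ?_
    obtain ⟨⟨j, i⟩, rfl⟩ := blockEquiv.surjective k
    refine le_trans ?_ (ENNReal.le_tsum j)
    rw [blockEquiv_apply] at hk
    have hi := i.2
    rw [if_pos (by omega)]
    exact le_iSup (fun i : Fin (2 ^ j) => ENNReal.ofReal |x (blockEquiv ⟨j, i⟩)|) i
  calc tandoriNorm x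
      ≤ ∑' m : ℕ, ∑' j : ℕ, if m < 2 * 2 ^ j then blockSup x j else 0 :=
        ENNReal.tsum_le_tsum hterm
    _ = ∑' j : ℕ, ∑' m : ℕ, if m < 2 * 2 ^ j then blockSup x j else 0 := ENNReal.tsum_comm
    _ = ∑' j : ℕ, 2 * (2 ^ j * blockSup x j) := by
        refine tsum_congr fun j => ?_
        rw [tsum_eq_sum (s := Finset.range (2 * 2 ^ j))
          (fun m hm => if_neg (by simpa using hm)),
          Finset.sum_congr rfl (fun m hm => if_pos (Finset.mem_range.1 hm))]
        simp [mul_assoc]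
    _ = 2 * dyadicNorm x := ENNReal.tsum_mul_left

/-- The `n`-th dyadic block of `x`, multiplied by the weight `2 ^ n`. -/
def block (x : ℕ → ℝ) (n : ℕ) : PiLp ⊤ (fun _ : Fin (2 ^ n) => ℝ) :=
  WithLp.toLp ⊤ fun i => 2 ^ n * x (blockEquiv ⟨n, i⟩)

lemma enorm_block (x : ℕ → ℝ) (n : ℕ) : ‖block x n‖ₑ = 2 ^ n * blockSup x n := by
  rw [enorm_eq_nnnorm, PiLp.nnnorm_eq_ciSup, ENNReal.coe_iSup (Set.finite_range _).bddAbove,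
    blockSup, ENNReal.mul_iSup]
  refine iSup_congr fun i => ?_
  rw [← enorm_eq_nnnorm, ← Real.enorm_eq_ofReal_abs]
  simp only [block, enorm_mul, enorm_pow]
  congr 2
  simp [Real.enorm_eq_ofReal_abs]

lemma memℓp_one_iff {F : ℕ → Type*} [∀ n, NormedAddCommGroup (F n)] (f : ∀ n, F n) :
    Memℓp f 1 ↔ ∑' n, ‖f n‖ₑ ≠ ⊤ := by
  rw [memℓp_gen_iff (by simp)]
  simp only [enorm_eq_nnnorm]
  rw [ENNReal.tsum_coe_ne_top_iff_summable_coe]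
  simp

lemma lp_one_norm {F : ℕ → Type*} [∀ n, NormedAddCommGroup (F n)] (f : lp F 1) :
    ‖f‖ = (∑' n, ‖f n‖ₑ).toReal := by
  rw [lp.norm_eq_tsum_rpow (by simp), ENNReal.tsum_toReal_eq (by simp)]
  simp

lemma tsum_enorm_block (x : ℕ → ℝ) : ∑' n, ‖block x n‖ₑ = dyadicNorm x :=
  tsum_congr fun n => enorm_block x n

lemma memℓp_block (x : ℕ → ℝ) : Memℓp (block x) 1 ↔ tandoriNorm x ≠ ⊤ := by
  rw [memℓp_one_iff, tsum_enorm_block]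
  constructor
  · exact fun h => ne_top_of_le_ne_top (ENNReal.mul_ne_top (by simp) h) (tandoriNorm_le x)
  · exact fun h => ne_top_of_le_ne_top (ENNReal.mul_ne_top (by simp) h) (dyadicNorm_le x)

lemma block_injective : Function.Injective block := by
  intro x y h
  funext k
  obtain ⟨⟨n, i⟩, rfl⟩ := blockEquiv.surjective k
  have h1 := congrArg (fun f => f n i) h
  simpa [block] using h1

lemma block_surjective : Function.Surjective block := by
  intro y
  let z : (Σ n : ℕ, Fin (2 ^ n)) → ℝ := fun p => (2 ^ p.1)⁻¹ * y p.1 p.2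
  refine ⟨z ∘ blockEquiv.symm, ?_⟩
  funext n
  ext i
  simp only [block, Function.comp_apply, Equiv.symm_apply_apply]
  simp [z]

/-- The Tandori sequence space `l̃₁` is isomorphic, as a Banach space, to
the `l₁`-sum `(⊕_{n=0}^∞ l_∞^{2^n})_{l₁}`, where `l_∞^m` is `ℝ^m` with the max norm. -/
theorem tandori_l1_isomorphic_l1_sum_of_finite_sup_spaces :
    ∀ (E : Type*) [NormedAddCommGroup E] [NormedSpace ℝ E] [CompleteSpace E],
      RepSeq tandoriNorm E →
      Nonempty (E ≃L[ℝ] lp (fun n : ℕ => PiLp ⊤ (fun _ : Fin (2 ^ n) => ℝ)) 1) := by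
  intro E _ _ _ ⟨J, hJinj, hJrange, hJnorm⟩
  have hfin : ∀ e, tandoriNorm (J e) ≠ ⊤ := fun e => by
    have h : J e ∈ Set.range J := ⟨e, rfl⟩
    rwa [hJrange] at h
  let Φ : E →ₗ[ℝ] lp (fun n : ℕ => PiLp ⊤ (fun _ : Fin (2 ^ n) => ℝ)) 1 :=
    { toFun := fun e => ⟨block (J e), (memℓp_block _).2 (hfin e)⟩
      map_add' := fun a b => by
        ext n i
        change 2 ^ n * J (a + b) _ = 2 ^ n * J a _ + 2 ^ n * J b _
        simp [mul_add]
      map_smul' := fun c a => by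
        ext n i
        simp [block, mul_left_comm] }
  have hΦ : ∀ e n, Φ e n = block (J e) n := fun _ _ => rfl
  have hnorm : ∀ e, ‖Φ e‖ = (dyadicNorm (J e)).toReal := fun e => by
    rw [lp_one_norm, ← tsum_enorm_block]
    simp only [hΦ]
  have hbij : Function.Bijective Φ := by
    constructor
    · intro a b h
      exact hJinj (block_injective (congrArg Subtype.val h))
    · intro y
      obtain ⟨x, hx⟩ := block_surjective y
      have hx' : x ∈ Set.range J := by
        rw [hJrange]
        exact (memℓp_block x).1 (hx ▸ lp.memℓp y)
      obtain ⟨e, rfl⟩ := hx'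
      exact ⟨e, Subtype.ext hx⟩
  have hdfin : ∀ e, dyadicNorm (J e) ≠ ⊤ := fun e =>
    ne_top_of_le_ne_top (ENNReal.mul_ne_top (by simp) (hfin e)) (dyadicNorm_le _)
  refine ⟨(LinearEquiv.ofBijective Φ hbij).toContinuousLinearEquivOfBounds 5 2 ?_ ?_⟩
  · intro e
    rw [LinearEquiv.ofBijective_apply, hnorm, hJnorm]
    have h := ENNReal.toReal_mono (ENNReal.mul_ne_top (by simp) (hfin e)) (dyadicNorm_le (J e))
    simpa using h
  · intro y
    obtain ⟨e, rfl⟩ := (LinearEquiv.ofBijective Φ hbij).surjective y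
    rw [LinearEquiv.symm_apply_apply, LinearEquiv.ofBijective_apply, hnorm, hJnorm]
    have h := ENNReal.toReal_mono (ENNReal.mul_ne_top (by simp) (hdfin e)) (tandoriNorm_le (J e))
    simpa using h

end
end

section
/- The Cesàro sequence space ces_∞ is isomorphic as a Banach space to the l_∞-sum (⊕_{n=0}^∞ l_1^{2^n})_{l_∞}, where l_1^m denotes ℝ^m equipped with the sum norm. -/
/-!
Split a sequence into its dyadic blocks, the `n`-th one consisting of the `2^n` entries with
(0-based) indices `2^n - 1, …, 2^(n+1) - 2`, and scale the `n`-th block by `2^(-n)`. This gives a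
linear map from sequences to families in `∏ₙ l₁^{2^n}`, bijective because the blocks partition `ℕ`.

The `ces_∞` norm and the supremum of the `l₁`-norms of the scaled blocks are equivalent. The `n`-th
block is part of an initial segment of length at most `2^(n+1)`, so its scaled norm is at most
twice the `ces_∞` norm (`norm_dyadicBlock_le`). Conversely an initial segment of length
between `2^L` and `2^(L+1)` is covered by the blocks `0, …, L`, whose total mass is controlled by a
geometric sum (`cesNorm_ne_top_of_norm_dyadicBlock_le`). Hence the block map restricts to a bounded
bijection from `ces_∞` onto the `l_∞`-sum, and the open mapping theorem makes it an isomorphism.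
-/

open MeasureTheory Filter Topology ENNReal Set

noncomputable section

/-- The `ces_∞` norm of a real sequence (0-based indexing: `x k` is the `(k+1)`-st term):
`sup_{n ≥ 1} (1/n) ∑_{k=1}^n |x_k|`. -/
def cesNorm (x : ℕ → ℝ) : ℝ≥0∞ :=
  ⨆ n : ℕ, (∑ k ∈ Finset.range (n + 1), ENNReal.ofReal |x k|) / ((n : ℝ≥0∞) + 1)

/-- The `n`-th dyadic block of `x`, the entries `x k` with `2^n - 1 ≤ k < 2^(n+1) - 1`,
scaled by `2^(-n)` and viewed as an element of `l₁^{2^n}`. -/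
def dyadicBlock (x : ℕ → ℝ) (n : ℕ) : PiLp 1 (fun _ : Fin (2 ^ n) => ℝ) :=
  WithLp.toLp 1 (fun i => ((2 : ℝ) ^ n)⁻¹ * x (2 ^ n - 1 + i))

lemma norm_dyadicBlock (x : ℕ → ℝ) (n : ℕ) :
    ‖dyadicBlock x n‖ =
      ((2 : ℝ) ^ n)⁻¹ * ∑ i ∈ Finset.range (2 ^ n), |x (2 ^ n - 1 + i)| := by
  rw [PiLp.norm_eq_of_L1, Finset.sum_range, Finset.mul_sum]
  refine Finset.sum_congr rfl fun i _ => ?_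
  simp [dyadicBlock]

lemma sum_le_of_cesNorm_ne_top {x : ℕ → ℝ} (h : cesNorm x ≠ ⊤) (n : ℕ) :
    ∑ k ∈ Finset.range (n + 1), |x k| ≤ (cesNorm x).toReal * ((n : ℝ) + 1) := by
  have h1 : (∑ k ∈ Finset.range (n + 1), ENNReal.ofReal |x k|) / ((n : ℝ≥0∞) + 1)
      ≤ cesNorm x :=
    le_iSup (fun n : ℕ =>
      (∑ k ∈ Finset.range (n + 1), ENNReal.ofReal |x k|) / ((n : ℝ≥0∞) + 1)) n
  have h2 := ENNReal.toReal_mono h h1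
  rw [← ENNReal.ofReal_sum_of_nonneg (fun _ _ => abs_nonneg _), ENNReal.toReal_div,
    ENNReal.toReal_ofReal (Finset.sum_nonneg fun _ _ => abs_nonneg _),
    ENNReal.toReal_add (by simp) (by simp)] at h2
  simp only [ENNReal.toReal_natCast, ENNReal.toReal_one] at h2
  rwa [div_le_iff₀ (by positivity)] at h2

lemma cesNorm_ne_top_of_sum_le {x : ℕ → ℝ} {C : ℝ}
    (h : ∀ n : ℕ, ∑ k ∈ Finset.range (n + 1), |x k| ≤ C * ((n : ℝ) + 1)) :
    cesNorm x ≠ ⊤ := by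
  refine ne_top_of_le_ne_top (ENNReal.ofReal_ne_top (r := C)) (iSup_le fun n => ?_)
  have hn : ((n : ℝ≥0∞) + 1) = ENNReal.ofReal ((n : ℝ) + 1) := by
    rw [ENNReal.ofReal_add (by positivity) (by norm_num)]; simp
  rw [← ENNReal.ofReal_sum_of_nonneg (fun _ _ => abs_nonneg _), hn,
    ← ENNReal.ofReal_div_of_pos (by positivity)]
  exact ENNReal.ofReal_le_ofReal ((div_le_iff₀ (by positivity)).2 (h n))

lemma sum_range_two_pow_sub_one (a : ℕ → ℝ) (n : ℕ) :
    ∑ k ∈ Finset.range (2 ^ (n + 1) - 1), a k =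
      ∑ k ∈ Finset.range (2 ^ n - 1), a k +
        ∑ i ∈ Finset.range (2 ^ n), a (2 ^ n - 1 + i) := by
  have h : 2 ^ (n + 1) - 1 = (2 ^ n - 1) + 2 ^ n := by
    have := Nat.one_le_two_pow (n := n)
    rw [pow_succ]; omega
  rw [h, Finset.sum_range_add]

/-- The `n`-th block is contained in the first `2^(n+1) - 1 ≤ 2 * 2^n` terms. -/
lemma norm_dyadicBlock_le {x : ℕ → ℝ} (h : cesNorm x ≠ ⊤) (n : ℕ) :
    ‖dyadicBlock x n‖ ≤ 2 * (cesNorm x).toReal := by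
  have h1 := sum_range_two_pow_sub_one (fun k => |x k|) n
  have h2 : 0 ≤ ∑ k ∈ Finset.range (2 ^ n - 1), |x k| :=
    Finset.sum_nonneg fun _ _ => abs_nonneg _
  have h3 := sum_le_of_cesNorm_ne_top h (2 ^ (n + 1) - 1)
  have h4 : ∑ k ∈ Finset.range (2 ^ (n + 1) - 1), |x k| ≤
      ∑ k ∈ Finset.range (2 ^ (n + 1) - 1 + 1), |x k| := by
    rw [Finset.sum_range_succ]; linarith [abs_nonneg (x (2 ^ (n + 1) - 1))]
  have h5 : (((2 ^ (n + 1) - 1 : ℕ) : ℝ) + 1) = 2 * 2 ^ n := by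
    rw [Nat.cast_sub Nat.one_le_two_pow]; push_cast; ring
  rw [h5] at h3
  rw [norm_dyadicBlock, inv_mul_le_iff₀ (by positivity)]
  linarith

lemma sum_range_le_of_norm_dyadicBlock_le {x : ℕ → ℝ} {C : ℝ}
    (h : ∀ n, ‖dyadicBlock x n‖ ≤ C) (n : ℕ) :
    ∑ k ∈ Finset.range (2 ^ n - 1), |x k| ≤ C * (2 ^ n - 1) := by
  induction n with
  | zero => simp
  | succ n ih =>
    have h1 := h n
    rw [norm_dyadicBlock, inv_mul_le_iff₀ (by positivity)] at h1
    rw [sum_range_two_pow_sub_one, pow_succ]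
    linarith

/-- With `2^L ≤ n + 1 < 2^(L+1)`, the first `n + 1` terms lie in the blocks `0, …, L`, whose total
mass is at most `2^(L+1) * C ≤ 2 * C * (n + 1)`. -/
lemma cesNorm_ne_top_of_norm_dyadicBlock_le {x : ℕ → ℝ} {C : ℝ}
    (h : ∀ n, ‖dyadicBlock x n‖ ≤ C) : cesNorm x ≠ ⊤ := by
  have hC : 0 ≤ C := (norm_nonneg _).trans (h 0)
  refine cesNorm_ne_top_of_sum_le (C := 2 * C) fun n => ?_
  set L := Nat.log 2 (n + 1)
  have hlow : 2 ^ L ≤ n + 1 := Nat.pow_log_le_self 2 (by omega)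
  have hup : n + 1 < 2 ^ (L + 1) := Nat.lt_pow_succ_log_self (by norm_num) _
  have h1 : ∑ k ∈ Finset.range (n + 1), |x k| ≤
      ∑ k ∈ Finset.range (2 ^ (L + 1) - 1), |x k| :=
    Finset.sum_le_sum_of_subset_of_nonneg (Finset.range_mono (by omega))
      fun _ _ _ => abs_nonneg _
  have h2 := sum_range_le_of_norm_dyadicBlock_le h (L + 1)
  have hlow' : (2 : ℝ) ^ L ≤ n + 1 := by exact_mod_cast hlow
  have hpow : (2 : ℝ) ^ (L + 1) = 2 * 2 ^ L := pow_succ' 2 L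
  rw [hpow] at h2
  nlinarith [mul_le_mul_of_nonneg_left hlow' hC]

/-- A sequence is determined by its dyadic blocks. -/
lemma eq_zero_of_dyadicBlock_eq_zero {x : ℕ → ℝ} (h : ∀ n, dyadicBlock x n = 0) : x = 0 := by
  funext k
  set L := Nat.log 2 (k + 1)
  have hlow : 2 ^ L ≤ k + 1 := Nat.pow_log_le_self 2 (by omega)
  have hup : k + 1 < 2 ^ (L + 1) := Nat.lt_pow_succ_log_self (by norm_num) _
  rw [pow_succ] at hup
  have hpos := Nat.one_le_two_pow (n := L)
  have h1 := congrArg (fun v => v.ofLp ⟨k + 1 - 2 ^ L, by omega⟩) (h L)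
  have h2 : 2 ^ L - 1 + (k + 1 - 2 ^ L) = k := by omega
  simpa [dyadicBlock, h2] using h1

/-- The blocks of a sequence can be prescribed arbitrarily. -/
lemma exists_dyadicBlock_eq (f : ∀ n : ℕ, PiLp 1 (fun _ : Fin (2 ^ n) => ℝ)) :
    ∃ x : ℕ → ℝ, ∀ n, dyadicBlock x n = f n := by
  -- Extending each `f n` by zero to all of `ℕ` avoids transporting along `Nat.log 2 (2^n + i) = n`.
  let g : ℕ → ℕ → ℝ := fun n k => if h : k < 2 ^ n then f n ⟨k, h⟩ else 0
  refine ⟨fun k => 2 ^ Nat.log 2 (k + 1) *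
    g (Nat.log 2 (k + 1)) (k + 1 - 2 ^ Nat.log 2 (k + 1)), fun n => ?_⟩
  ext i
  have hpos := Nat.one_le_two_pow (n := n)
  have hi := i.2
  have h1 : 2 ^ n - 1 + (i : ℕ) + 1 = 2 ^ n + i := by omega
  have h2 : Nat.log 2 (2 ^ n + (i : ℕ)) = n :=
    Nat.log_eq_of_pow_le_of_lt_pow (by omega) (by rw [pow_succ]; omega)
  have h3 : g n i = f n i := by simp [g]
  simp only [dyadicBlock, h1, h2, Nat.add_sub_cancel_left, h3]
  exact inv_mul_cancel_left₀ (by positivity) _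

/-- The Cesàro sequence space `ces_∞` is isomorphic, as a Banach space,
to the `l_∞`-sum `(⊕_{n=0}^∞ l₁^{2^n})_{l_∞}`, where `l₁^m` is `ℝ^m` with the sum norm. -/
theorem ces_infty_isomorphic_linfty_sum_of_finite_l1_spaces :
    ∀ (E : Type*) [NormedAddCommGroup E] [NormedSpace ℝ E] [CompleteSpace E],
      RepSeq cesNorm E →
      Nonempty (E ≃L[ℝ] lp (fun n : ℕ => PiLp 1 (fun _ : Fin (2 ^ n) => ℝ)) ⊤) := by
  intro E _ _ _ ⟨J, hJinj, hJrange, hJnorm⟩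
  have hfin : ∀ e, cesNorm (J e) ≠ ⊤ := fun e => by
    have : J e ∈ Set.range J := ⟨e, rfl⟩
    rwa [hJrange] at this
  have hbound : ∀ e n, ‖dyadicBlock (J e) n‖ ≤ 2 * ‖e‖ := fun e n => by
    rw [hJnorm]; exact norm_dyadicBlock_le (hfin e) n
  let T : E →ₗ[ℝ] lp (fun n : ℕ => PiLp 1 (fun _ : Fin (2 ^ n) => ℝ)) ⊤ :=
    { toFun := fun e => ⟨fun n => dyadicBlock (J e) n,
        memℓp_infty ⟨2 * ‖e‖, by rintro _ ⟨n, rfl⟩; exact hbound e n⟩⟩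
      map_add' := fun a b => by
        ext n i
        simp only [dyadicBlock, map_add, Pi.add_apply, mul_add]
        rfl
      map_smul' := fun c a => by
        ext n i
        simp [dyadicBlock, mul_left_comm] }
  have hT : ∀ e n, T e n = dyadicBlock (J e) n := fun _ _ => rfl
  let T' := T.mkContinuous 2 fun e =>
    lp.norm_le_of_forall_le (by positivity) fun n => hbound e n
  have hinj : Function.Injective T' := by
    refine (injective_iff_map_eq_zero T').2 fun e he => ?_
    refine (map_eq_zero_iff J hJinj).1 (eq_zero_of_dyadicBlock_eq_zero fun n => ?_)
    have he' : T e = 0 := he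
    rw [← hT, he']
    rfl
  have hsurj : Function.Surjective T' := by
    intro f
    obtain ⟨x, hx⟩ := exists_dyadicBlock_eq f
    have hxfin : cesNorm x ≠ ⊤ :=
      cesNorm_ne_top_of_norm_dyadicBlock_le (C := ‖f‖) fun n => by
        rw [hx]; exact lp.norm_apply_le_norm (by simp) f n
    obtain ⟨e, rfl⟩ : x ∈ Set.range J := by rw [hJrange]; exact hxfin
    exact ⟨e, lp.ext (funext hx)⟩
  exact ⟨ContinuousLinearEquiv.ofBijective T' (LinearMap.ker_eq_bot.2 hinj)
    (LinearMap.range_eq_top.2 hsurj)⟩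

end
end
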